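/- (Theorem 2, property 1, for g) Conditional on the acceptance event E⁺₁ ∪ E⁻, the accepted observation is distributed according to the density g: for every x ∈ ℝ, P(X ≤ x | E⁺₁ ∪ E⁻) = ∫_{(-∞, x]} g dμ. -/

import Mathlib

open MeasureTheory ProbabilityTheory Set

/-!
Since `f̂ / h ≤ g / h` on `D⁻`, the pieces `E⁺₁`, `E⁻₁`, `E⁻₂` glue together to the event
`V * M ≤ g(X) / h(X)`, so this is plain rejection sampling from `h` to `g`. Given `X = x` the
acceptance probability is `g x / (M * h x)`, so the accepted part of the law of `X` has density
`g / M`; its total mass is `1 / M`, and conditioning on acceptance cancels this constant.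
-/

theorem acceptance_union_eq_setOf_le {Ω α β : Type*} [LinearOrder α] [LinearOrder β]
    {f g : Ω → α} {a b v : Ω → β} (hab : ∀ ω, f ω < g ω → a ω ≤ b ω) :
    {ω | g ω ≤ f ω ∧ v ω ≤ b ω} ∪
        ({ω | f ω < g ω ∧ v ω ≤ a ω} ∪ {ω | f ω < g ω ∧ a ω < v ω ∧ v ω ≤ b ω}) =
      {ω | v ω ≤ b ω} := by
  have hlower : {ω | f ω < g ω ∧ v ω ≤ a ω} ∪ {ω | f ω < g ω ∧ a ω < v ω ∧ v ω ≤ b ω} =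
      {ω | f ω < g ω ∧ v ω ≤ b ω} := by
    ext ω
    have := hab ω
    simp only [mem_union, mem_ofPred_eq]
    grind
  rw [hlower]
  ext ω
  simp only [mem_union, mem_ofPred_eq, ← or_and_right, le_or_gt, true_and]

theorem volume_restrict_Icc_zero_one_Iic {r : ℝ} (hr : r ≤ 1) :
    volume.restrict (Icc (0 : ℝ) 1) (Iic r) = ENNReal.ofReal r := by
  have hinter : Iic r ∩ Icc 0 1 = Icc 0 r := by
    rw [inter_comm, ← Ici_inter_Iic, inter_assoc, Iic_inter_Iic, min_eq_right hr, Ici_inter_Iic]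
  rw [Measure.restrict_apply measurableSet_Iic, hinter, Real.volume_Icc, sub_zero]

section

variable {E Ω : Type*} [MeasurableSpace E] [MeasurableSpace Ω] {μ : Measure E} {P : Measure Ω}
  {X : Ω → E} {V : Ω → ℝ} {h g : E → ℝ} {M : ℝ}

theorem isProbabilityMeasure_withDensity_ofReal (hg : 0 ≤ᵐ[μ] g) (hg_int : ∫ x, g x ∂μ = 1) :
    IsProbabilityMeasure (μ.withDensity fun x ↦ ENNReal.ofReal (g x)) := by
  constructor
  rw [withDensity_apply _ MeasurableSet.univ, Measure.restrict_univ,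
    ← ofReal_integral_eq_lintegral_ofReal (integrable_of_integral_eq_one hg_int) hg, hg_int,
    ENNReal.ofReal_one]

theorem hasLaw_cond_of_map_restrict_eq_smul {ν : Measure E} [IsProbabilityMeasure ν] {S : Set Ω}
    {c : ENNReal} (hX : AEMeasurable X P) (hc : c ≠ 0) (hc_top : c ≠ ⊤)
    (hmap : (P.restrict S).map X = c • ν) : HasLaw X ν P[|S] where
  aemeasurable := hX.mono_ac cond_absolutelyContinuous
  map_eq := by
    have hPS : P S = c := by
      have := congrArg (· univ) hmap
      simpa [Measure.map_apply_of_aemeasurable hX.restrict] using this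
    rw [ProbabilityTheory.cond, Measure.map_smul, hmap, hPS, smul_smul,
      ENNReal.inv_mul_cancel hc hc_top, one_smul]

theorem map_restrict_uniform_le {Q : Measure E} {a : E → ℝ} (ha : Measurable a)
    (ha_le : ∀ᵐ x ∂Q, a x ≤ 1) (hX : HasLaw X Q P)
    (hV : HasLaw V (volume.restrict (Icc 0 1)) P) (hXV : IndepFun X V P) :
    (P.restrict {ω | V ω ≤ a (X ω)}).map X = Q.withDensity fun x ↦ ENNReal.ofReal (a x) := by
  have : IsFiniteMeasure P := hV.isFiniteMeasure
  have hjoint : HasLaw (fun ω ↦ (X ω, V ω)) (Q.prod (volume.restrict (Icc 0 1))) P :=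
    hXV.hasLaw_prod hX hV
  have hsub : MeasurableSet {p : E × ℝ | p.2 ≤ a p.1} :=
    measurableSet_le measurable_snd (ha.comp measurable_fst)
  have haccept : NullMeasurableSet {ω | V ω ≤ a (X ω)} P :=
    hjoint.aemeasurable.nullMeasurableSet_preimage hsub
  ext A hA
  have hslice (x : E) : volume.restrict (Icc (0 : ℝ) 1) {v | x ∈ A ∧ v ≤ a x} =
      A.indicator (fun x ↦ volume.restrict (Icc (0 : ℝ) 1) (Iic (a x))) x := by
    by_cases hx : x ∈ A <;> simp [hx, Iic_def]
  calc (P.restrict {ω | V ω ≤ a (X ω)}).map X A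
      = P {ω | X ω ∈ A ∧ V ω ≤ a (X ω)} := by
        rw [Measure.map_apply_of_aemeasurable hX.aemeasurable.restrict hA,
          Measure.restrict_apply₀' haccept]
        rfl
    _ = Q.prod (volume.restrict (Icc 0 1)) {p | p.1 ∈ A ∧ p.2 ≤ a p.1} :=
        hjoint.measure_eq ((measurable_fst hA).inter hsub)
    _ = ∫⁻ x, volume.restrict (Icc (0 : ℝ) 1) {v | x ∈ A ∧ v ≤ a x} ∂Q :=
        Measure.prod_apply ((measurable_fst hA).inter hsub)
    _ = ∫⁻ x in A, volume.restrict (Icc (0 : ℝ) 1) (Iic (a x)) ∂Q := by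
        rw [← lintegral_indicator hA, lintegral_congr hslice]
    _ = ∫⁻ x in A, ENNReal.ofReal (a x) ∂Q :=
        lintegral_congr_ae <| ae_restrict_of_ae <|
          ha_le.mono fun x hx ↦ volume_restrict_Icc_zero_one_Iic hx
    _ = Q.withDensity (fun x ↦ ENNReal.ofReal (a x)) A := (withDensity_apply _ hA).symm

theorem ae_withDensity_div_div_le_one (hh : Measurable h) (hM : 0 < M)
    (hgh : ∀ᵐ x ∂μ, g x ≤ M * h x) :
    ∀ᵐ x ∂μ.withDensity (fun x ↦ ENNReal.ofReal (h x)), g x / h x / M ≤ 1 := by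
  rw [ae_withDensity_iff hh.ennreal_ofReal]
  filter_upwards [hgh] with x hx hx0
  have hpos : 0 < h x := by simpa only [ne_eq, ENNReal.ofReal_eq_zero, not_le] using hx0
  rwa [div_div, div_le_one (mul_pos hpos hM), mul_comm]

theorem withDensity_withDensity_div_div (hh : Measurable h) (hg : Measurable g) (hM : 0 < M)
    (hgh : ∀ᵐ x ∂μ, g x ≤ M * h x) :
    (μ.withDensity fun x ↦ ENNReal.ofReal (h x)).withDensity
        (fun x ↦ ENNReal.ofReal (g x / h x / M)) =
      ENNReal.ofReal M⁻¹ • μ.withDensity fun x ↦ ENNReal.ofReal (g x) := by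
  have hM' : 0 ≤ M⁻¹ := inv_nonneg.2 hM.le
  rw [← withDensity_mul _ (by fun_prop) (by fun_prop), ← withDensity_smul _ (by fun_prop)]
  refine withDensity_congr_ae ?_
  filter_upwards [hgh] with x hx
  rw [Pi.mul_apply, Pi.smul_apply, smul_eq_mul, ← ENNReal.ofReal_mul hM']
  rcases le_or_gt (h x) 0 with hx0 | hx0
  · have hgx : g x ≤ 0 := hx.trans (mul_nonpos_of_nonneg_of_nonpos hM.le hx0)
    rw [ENNReal.ofReal_of_nonpos hx0, zero_mul,
      ENNReal.ofReal_of_nonpos (mul_nonpos_of_nonneg_of_nonpos hM' hgx)]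
  · rw [← ENNReal.ofReal_mul hx0.le]
    congr 1
    field_simp

theorem hasLaw_cond_mul_le_div (hh : Measurable h) (hg : Measurable g)
    [IsProbabilityMeasure (μ.withDensity fun x ↦ ENNReal.ofReal (g x))] (hM : 0 < M)
    (hgh : ∀ᵐ x ∂μ, g x ≤ M * h x)
    (hX : HasLaw X (μ.withDensity fun x ↦ ENNReal.ofReal (h x)) P)
    (hV : HasLaw V (volume.restrict (Icc 0 1)) P) (hXV : IndepFun X V P) :
    HasLaw X (μ.withDensity fun x ↦ ENNReal.ofReal (g x))
      P[|{ω | V ω * M ≤ g (X ω) / h (X ω)}] := by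
  have hmap : (P.restrict {ω | V ω * M ≤ g (X ω) / h (X ω)}).map X =
      ENNReal.ofReal M⁻¹ • μ.withDensity fun x ↦ ENNReal.ofReal (g x) := by
    simp_rw [← le_div_iff₀ hM]
    rw [map_restrict_uniform_le (a := fun x ↦ g x / h x / M) (by fun_prop)
      (ae_withDensity_div_div_le_one hh hM hgh) hX hV hXV,
      withDensity_withDensity_div_div hh hg hM hgh]
  exact hasLaw_cond_of_map_restrict_eq_smul hX.aemeasurable
    (ENNReal.ofReal_pos.2 (inv_pos.2 hM)).ne' ENNReal.ofReal_ne_top hmap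

theorem stmt6_general (fhat : E → ℝ) (hh : Measurable h) (hg : Measurable g)
    (h_nonneg : ∀ x, 0 ≤ h x) (g_nonneg : ∀ x, 0 ≤ g x) (g_int : ∫ x, g x ∂μ = 1)
    (hM : 0 < M) (hgh : ∀ᵐ x ∂μ, g x ≤ M * h x)
    (hX : HasLaw X (μ.withDensity fun x ↦ ENNReal.ofReal (h x)) P)
    (hV : HasLaw V (volume.restrict (Icc 0 1)) P) (hXV : IndepFun X V P)
    {A : Set E} (hA : MeasurableSet A) :
    (P[|{ω | g (X ω) ≤ fhat (X ω) ∧ V ω * M ≤ g (X ω) / h (X ω)}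
        ∪ ({ω | fhat (X ω) < g (X ω) ∧ V ω * M ≤ fhat (X ω) / h (X ω)}
          ∪ {ω | fhat (X ω) < g (X ω) ∧ fhat (X ω) / h (X ω) < V ω * M
              ∧ V ω * M ≤ g (X ω) / h (X ω)})] {ω | X ω ∈ A}).toReal =
      ∫ t in A, g t ∂μ := by
  have : IsProbabilityMeasure (μ.withDensity fun x ↦ ENNReal.ofReal (g x)) :=
    isProbabilityMeasure_withDensity_ofReal (ae_of_all _ g_nonneg) g_int
  rw [acceptance_union_eq_setOf_le fun ω hlt ↦ div_le_div_of_nonneg_right hlt.le (h_nonneg (X ω)),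
    (hasLaw_cond_mul_le_div hh hg hM hgh hX hV hXV).measure_eq (p := (· ∈ A)) hA, ofPred_mem_eq,
    withDensity_apply _ hA,
    integral_eq_lintegral_of_nonneg_ae (ae_of_all _ g_nonneg) hg.aestronglyMeasurable]

end

theorem stmt6
    (μ : Measure ℝ) [SigmaFinite μ]
    (h g fhat : ℝ → ℝ)
    (hmeas_h : Measurable h) (hmeas_g : Measurable g) (hmeas_f : Measurable fhat)
    (h_nonneg : ∀ x, 0 ≤ h x) (g_nonneg : ∀ x, 0 ≤ g x) (f_nonneg : ∀ x, 0 ≤ fhat x)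
    (h_int : ∫ x, h x ∂μ = 1) (g_int : ∫ x, g x ∂μ = 1) (f_int : ∫ x, fhat x ∂μ = 1)
    (h_pos : ∀ x, 0 < g x + fhat x → 0 < h x)
    (Mstar : ℝ) (hM : 0 < Mstar)
    (hMf : ∀ᵐ x ∂μ, fhat x ≤ Mstar * h x)
    (hMg : ∀ᵐ x ∂μ, g x ≤ Mstar * h x)
    (Ω : Type*) [MeasurableSpace Ω] (P : Measure Ω) [IsProbabilityMeasure P]
    (X V : Ω → ℝ) (hX : Measurable X) (hV : Measurable V)
    (hXlaw : Measure.map X P = μ.withDensity (fun x => ENNReal.ofReal (h x)))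
    (hVlaw : Measure.map V P = volume.restrict (Set.Icc (0:ℝ) 1))
    (hXV : IndepFun X V P) :
    ∀ x : ℝ,
      ((P[|{ω | g (X ω) ≤ fhat (X ω) ∧ V ω * Mstar ≤ g (X ω) / h (X ω)}
          ∪ ({ω | fhat (X ω) < g (X ω) ∧ V ω * Mstar ≤ fhat (X ω) / h (X ω)}
            ∪ {ω | fhat (X ω) < g (X ω) ∧ fhat (X ω) / h (X ω) < V ω * Mstar
                ∧ V ω * Mstar ≤ g (X ω) / h (X ω)})]) {ω | X ω ≤ x}).toReal
        = ∫ t in Set.Iic x, g t ∂μ :=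
  fun _ ↦ stmt6_general fhat hmeas_h hmeas_g h_nonneg g_nonneg g_int hM hMg
    ⟨hX.aemeasurable, hXlaw⟩ ⟨hV.aemeasurable, hVlaw⟩ hXV measurableSet_Iic
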